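/- Let A₁, A₂ ⊆ ℝⁿ be locally separated at a point y ∈ A₁ ∩ A₂, and let K₁ and K₂ be Boltyanski approximating cones to A₁ and A₂ at y, respectively. If at least one of the cones K₁, K₂ is not a linear subspace, then K₁ and K₂ are linearly separable: there exists a nonzero linear form p ∈ (ℝⁿ)* such that p·v₁ ≥ 0 for all v₁ ∈ K₁ and p·v₂ ≤ 0 for all v₂ ∈ K₂. -/

import Mathlib

open Set Metric Filter Asymptotics Topology

/-- A convex cone in a real vector space: contains `0`, is convex, and is
invariant under multiplication by nonnegative scalars. -/
def IsConvexCone {E : Type*} [AddCommMonoid E] [Module ℝ E] (C : Set E) : Prop :=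
  (0 : E) ∈ C ∧ Convex ℝ C ∧ ∀ r : ℝ, 0 ≤ r → ∀ c ∈ C, r • c ∈ C

/-- `K` is a Boltyanski approximating cone to `A` at `y`: there are `m : ℕ`, a convex cone
`C ⊆ ℝᵐ`, a linear map `L : ℝᵐ → E` with `K = L(C)`, a `δ > 0` and a continuous map
`F : C ∩ B_m(δ) → A` with `F 0 = y` and `F c = y + L c + o(c)`. -/
def IsBoltyanskiCone {E : Type*} [NormedAddCommGroup E] [NormedSpace ℝ E]
    (A : Set E) (y : E) (K : Set E) : Prop :=
  ∃ (m : ℕ) (C : Set (EuclideanSpace ℝ (Fin m)))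
    (L : EuclideanSpace ℝ (Fin m) →ₗ[ℝ] E) (δ : ℝ)
    (F : EuclideanSpace ℝ (Fin m) → E),
    IsConvexCone C ∧ K = ⇑L '' C ∧ 0 < δ ∧
    ContinuousOn F (C ∩ closedBall 0 δ) ∧
    (∀ c ∈ C ∩ closedBall 0 δ, F c ∈ A) ∧ F 0 = y ∧
    (fun c => F c - y - L c) =o[𝓝[C ∩ closedBall 0 δ] 0] (fun c => c)


/-- `A₁` and `A₂` are locally separated at `y` if some neighborhood `N` of `y`
satisfies `A₁ ∩ A₂ ∩ N = {y}`. -/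
def LocallySeparated {X : Type*} [TopologicalSpace X] (A₁ A₂ : Set X) (y : X) : Prop :=
  ∃ N ∈ nhds y, A₁ ∩ A₂ ∩ N = {y}

/-!
If `K₁ - K₂` is not the whole space, a functional nonnegative on the convex cone `K₁ - K₂`
separates `K₁` from `K₂`. If it is the whole space, then every common vector `v = L₁ a = L₂ b` of
`K₁` and `K₂` is tangent to `A₁ ∩ A₂` at `y`: the map `(a, b) ↦ F₁ a - F₂ b` has the surjective
derivative `L₁ a - L₂ b` along `C₁ × C₂`, and Brouwer's fixed point theorem, applied to the rescaled
equation `ε⁻¹ (F₁ (ε a') - F₂ (ε b')) = 0` near `(a, b)` along a continuous right inverse of the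
derivative, yields zeros `(ε a', ε b')` with `(a', b')` arbitrarily close to `(a, b)`. Local
separation therefore forces `K₁ ∩ K₂ = {0}`. Given `v ∈ K₁`, write `-v = a - b` with `a ∈ K₁` and
`b ∈ K₂`; then `v + a = b` is a common vector, so `-v = a ∈ K₁`. Thus `K₁`, and likewise `K₂`, is a
linear subspace.

Brouwer's theorem rests on the no-retraction theorem. Suppose `f` is `C¹` and is the identity on
the frontier of a compact set `s`. The integral of `det (id + t (Df - id))` over `s` is a polynomial
in `t`; for small `t` the map `x + t (f x - x)` permutes `s`, so the polynomial equals the volume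
of `s` near `t = 0` and hence at `t = 1`. A `C¹` retraction of a ball onto its sphere would have
`det Df = 0` on the ball, whose volume is positive.
-/

section Jacobian

open MeasureTheory Polynomial

theorem exists_polynomial_eval_eq_det_id_add_smul {R M : Type*} [CommRing R] [AddCommGroup M]
    [Module R M] [Module.Free R M] [Module.Finite R M] (f : M →ₗ[R] M) :
    ∃ P : R[X], P.natDegree ≤ Module.finrank R M ∧
      ∀ t, P.eval t = LinearMap.det (LinearMap.id + t • f) := by
  nontriviality R
  let b := Module.Free.chooseBasis R M
  let A := LinearMap.toMatrix b b f
  refine ⟨((X : R[X]) • A.map C + (1 : Matrix _ _ R).map C).det, ?_, fun t => ?_⟩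
  · rw [Module.finrank_eq_card_basis b]
    exact natDegree_det_X_add_C_le A 1
  · rw [← LinearMap.det_toMatrix b, ← coe_evalRingHom, RingHom.map_det]
    congr 1
    ext i j
    by_cases hij : i = j <;> simp [A, hij, add_comm, mul_comm t]

theorem exists_polynomial_eval_eq_integral {α : Type*} [MeasurableSpace α] {μ : Measure α}
    {f : ℝ → α → ℝ} (n : ℕ) (hf : ∀ x, ∃ P : ℝ[X], P.natDegree ≤ n ∧ ∀ t, P.eval t = f t x)
    (hint : ∀ t, Integrable (f t) μ) : ∃ Q : ℝ[X], ∀ t, Q.eval t = ∫ x, f t x ∂μ := by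
  choose P hdeg heval using hf
  let s := Finset.range (n + 1)
  have hinterp (x : α) : P x = Lagrange.interpolate s (fun i : ℕ => (i : ℝ)) (fun i => f i x) := by
    simp only [← heval]
    refine Lagrange.eq_interpolate Nat.cast_injective.injOn ?_
    rw [Finset.card_range]
    exact degree_le_natDegree.trans_lt (Nat.cast_lt.2 (Nat.lt_succ_of_le (hdeg x)))
  refine ⟨Lagrange.interpolate s (fun i : ℕ => (i : ℝ)) (fun i => ∫ x, f i x ∂μ), fun t => ?_⟩
  simp only [← heval _ t, hinterp, Lagrange.interpolate_apply, eval_finsetSum, eval_mul, eval_C]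
  simp only [← integral_mul_const]
  exact (integral_finsetSum s fun i _ => (hint i).mul_const _).symm

variable {E : Type*} [NormedAddCommGroup E] [NormedSpace ℝ E]

theorem bijective_add_of_lipschitzWith [CompleteSpace E] {g : E → E} {K : NNReal}
    (hg : LipschitzWith K g) (hK : K < 1) : Function.Bijective fun x => x + g x := by
  have happrox : ApproximatesLinearOn (fun x => x + g x)
      (ContinuousLinearEquiv.refl ℝ E : E →L[ℝ] E) univ K := by
    rw [ApproximatesLinearOn.approximatesLinearOn_iff_lipschitzOnWith, lipschitzOnWith_univ]
    simpa [Function.comp_def, Pi.sub_def] using hg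
  have hc : Subsingleton E ∨
      K < ‖((ContinuousLinearEquiv.refl ℝ E).symm : E →L[ℝ] E)‖₊⁻¹ := by
    rcases subsingleton_or_nontrivial E with hE | hE
    · exact Or.inl hE
    · exact Or.inr (by simpa using hK)
  exact ⟨injOn_univ.1 (happrox.injOn hc), happrox.surjective hc⟩

theorem eventually_forall_det_id_add_smul_pos {X : Type*} [TopologicalSpace X] {A : X → E →L[ℝ] E}
    {s : Set X} (hs : IsCompact s) (hA : Continuous A) :
    ∀ᶠ t : ℝ in 𝓝 0, ∀ x ∈ s, 0 < (ContinuousLinearMap.id ℝ E + t • A x).det := by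
  refine hs.eventually_forall_of_forall_eventually fun x _ => ?_
  have hcont : Continuous fun z : ℝ × X => (ContinuousLinearMap.id ℝ E + z.1 • A z.2).det :=
    ContinuousLinearMap.continuous_det.comp <|
      continuous_const.add (continuous_fst.smul (hA.comp continuous_snd))
  refine hcont.continuousAt.eventually_const_lt ?_
  simp [ContinuousLinearMap.det]

variable [FiniteDimensional ℝ E]

theorem lipschitzWith_indicator_of_eqOn_frontier {F : Type*} [SeminormedAddCommGroup F]
    {g : E → F} {s : Set E} {K : NNReal} (hs : IsClosed s) (hg : LipschitzOnWith K g s)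
    (hfr : EqOn g 0 (frontier s)) : LipschitzWith K (s.indicator g) := by
  have hcross {x y : E} (hx : x ∈ s) (hy : y ∉ s) : dist (g x) 0 ≤ K * dist x y := by
    obtain ⟨z, hz, hxz⟩ := exists_mem_frontier_infDist_compl_eq_dist hx fun h => hy (h ▸ mem_univ y)
    calc dist (g x) 0 = dist (g x) (g z) := by rw [hfr hz, Pi.zero_apply]
      _ ≤ K * dist x z := hg.dist_le_mul x hx z (hs.frontier_subset hz)
      _ ≤ K * dist x y := by
        rw [← hxz]
        gcongr
        exact infDist_le_dist_of_mem hy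
  refine LipschitzWith.of_dist_le_mul fun x y => ?_
  by_cases hx : x ∈ s <;> by_cases hy : y ∈ s
  · simpa only [indicator_of_mem, hx, hy] using hg.dist_le_mul x hx y hy
  · simpa only [indicator_of_mem hx, indicator_of_notMem hy] using hcross hx hy
  · simpa only [indicator_of_mem hy, indicator_of_notMem hx, dist_comm] using hcross hy hx
  · simpa only [indicator_of_notMem, hx, hy, not_false_eq_true, dist_self] using by positivity

-- Extended by zero outside `s`, `g` stays Lipschitz, so for small `t` the perturbed identity is a
-- bijection of all of `E`; it fixes `sᶜ` pointwise and hence permutes `s`.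
theorem eventually_bijOn_add_smul {g : E → E} {s : Set E} (hs : IsCompact s)
    (hg : ContDiff ℝ 1 g) (hfr : EqOn g 0 (frontier s)) :
    ∀ᶠ t : ℝ in 𝓝 0, BijOn (fun x => x + t • g x) s s := by
  obtain ⟨K, hK⟩ := hg.locallyLipschitz.locallyLipschitzOn.exists_lipschitzOnWith_of_compact hs
  have hsmall : ∀ᶠ t : ℝ in 𝓝 0, ‖t‖₊ * K < 1 :=
    (continuous_nnnorm.mul continuous_const).continuousAt.eventually_lt_const (by simp)
  filter_upwards [hsmall] with t ht
  have hbij : Function.Bijective fun x => x + t • s.indicator g x :=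
    bijective_add_of_lipschitzWith ((lipschitzWith_smul t).comp
      (lipschitzWith_indicator_of_eqOn_frontier hs.isClosed hK hfr)) ht
  have hcompl : (fun x => x + t • s.indicator g x) '' sᶜ = sᶜ := by
    rw [image_congr fun x hx => by rw [indicator_of_notMem hx, smul_zero, add_zero], image_id']
  rw [image_compl_eq hbij, compl_inj_iff] at hcompl
  have hBij : BijOn (fun x => x + t • s.indicator g x) s s :=
    ⟨mapsTo_iff_image_subset.2 hcompl.le, hbij.injective.injOn, hcompl.ge⟩
  exact hBij.congr fun x hx => by simp only [indicator_of_mem hx]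

variable [MeasurableSpace E] [BorelSpace E] (μ : Measure E) [μ.IsAddHaarMeasure]

theorem eventually_setIntegral_det_id_add_smul_fderiv {g : E → E} {s : Set E} (hs : IsCompact s)
    (hg : ContDiff ℝ 1 g) (hfr : EqOn g 0 (frontier s)) :
    ∀ᶠ t : ℝ in 𝓝 0,
      ∫ x in s, (ContinuousLinearMap.id ℝ E + t • fderiv ℝ g x).det ∂μ = μ.real s := by
  filter_upwards [eventually_bijOn_add_smul hs hg hfr,
    eventually_forall_det_id_add_smul_pos hs (hg.continuous_fderiv one_ne_zero)] with t hbij hpos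
  have hderiv (x : E) : HasFDerivAt (fun x => x + t • g x)
      (ContinuousLinearMap.id ℝ E + t • fderiv ℝ g x) x :=
    (hasFDerivAt_id x).add ((hg.differentiable one_ne_zero x).hasFDerivAt.const_smul t)
  calc ∫ x in s, (ContinuousLinearMap.id ℝ E + t • fderiv ℝ g x).det ∂μ
      = ∫ x in s, |(ContinuousLinearMap.id ℝ E + t • fderiv ℝ g x).det| • (1 : ℝ) ∂μ :=
        setIntegral_congr_fun hs.measurableSet fun x hx => by
          simp only [abs_of_pos (hpos x hx), smul_eq_mul, mul_one]
    _ = ∫ _ in (fun x => x + t • g x) '' s, (1 : ℝ) ∂μ :=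
        (integral_image_eq_integral_abs_det_fderiv_smul μ hs.measurableSet
          (fun x _ => (hderiv x).hasFDerivWithinAt) hbij.injOn
          fun _ => 1).symm
    _ = μ.real s := by simp [hbij.image_eq]

theorem setIntegral_det_fderiv_of_eqOn_frontier {f : E → E} {s : Set E} (hs : IsCompact s)
    (hf : ContDiff ℝ 1 f) (hfr : EqOn f id (frontier s)) :
    ∫ x in s, (fderiv ℝ f x).det ∂μ = μ.real s := by
  let g : E → E := fun x => f x - x
  have hg : ContDiff ℝ 1 g := hf.sub contDiff_id
  have hfderiv (x : E) :
      ContinuousLinearMap.id ℝ E + (1 : ℝ) • fderiv ℝ g x = fderiv ℝ f x := by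
    have hg' : HasFDerivAt g (fderiv ℝ f x - ContinuousLinearMap.id ℝ E) x :=
      (hf.differentiable one_ne_zero x).hasFDerivAt.sub (hasFDerivAt_id x)
    rw [hg'.fderiv, one_smul, add_sub_cancel]
  have hint (t : ℝ) :
      IntegrableOn (fun x => (ContinuousLinearMap.id ℝ E + t • fderiv ℝ g x).det) s μ :=
    (ContinuousLinearMap.continuous_det.comp <| continuous_const.add <|
      (hg.continuous_fderiv one_ne_zero).const_smul t).continuousOn.integrableOn_compact hs
  obtain ⟨Q, hQ⟩ := exists_polynomial_eval_eq_integral (Module.finrank ℝ E)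
    (fun x => exists_polynomial_eval_eq_det_id_add_smul (fderiv ℝ g x).toLinearMap) hint
  have hconst : Q = C (μ.real s) := by
    refine eq_of_infinite_eval_eq _ _ (infinite_of_mem_nhds 0 ?_)
    filter_upwards [eventually_setIntegral_det_id_add_smul_fderiv μ hs hg
      fun x hx => by simp [g, hfr hx]] with t ht
    exact (hQ t).trans (ht.trans eval_C.symm)
  calc ∫ x in s, (fderiv ℝ f x).det ∂μ
      = ∫ x in s, (ContinuousLinearMap.id ℝ E + (1 : ℝ) • fderiv ℝ g x).det ∂μ := by
        simp only [hfderiv]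
    _ = Q.eval 1 := (hQ 1).symm
    _ = μ.real s := by rw [hconst, eval_C]

end Jacobian

section Brouwer

open MeasureTheory

theorem det_fderiv_eq_zero_of_eventually_mem {E : Type*} [NormedAddCommGroup E] [NormedSpace ℝ E]
    [FiniteDimensional ℝ E] {f : E → E} {t : Set E} {x : E} (hf : ContDiffAt ℝ 1 f x)
    (ht : interior t = ∅) (hft : ∀ᶠ z in 𝓝 x, f z ∈ t) : (fderiv ℝ f x).det = 0 := by
  have := FiniteDimensional.complete ℝ E
  by_contra hdet
  have hunit : IsUnit (fderiv ℝ f x).toLinearMap :=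
    (LinearMap.isUnit_iff_isUnit_det _).2 (isUnit_iff_ne_zero.2 hdet)
  have hsurj : (fderiv ℝ f x).range = ⊤ := (LinearMap.isUnit_iff_range_eq_top _).1 hunit
  have hmap := (hf.hasStrictFDerivAt one_ne_zero).map_nhds_eq_of_surj hsurj
  have hmem : t ∈ 𝓝 (f x) := by rw [← hmap]; exact hft
  exact (ht ▸ mem_interior_iff_mem_nhds.2 hmem : f x ∈ (∅ : Set E))

theorem not_mapsTo_sphere_of_eqOn_id {E : Type*} [NormedAddCommGroup E] [NormedSpace ℝ E]
    [FiniteDimensional ℝ E] {f : E → E} {r : ℝ} (hr : 0 < r) (hf : ContDiff ℝ 1 f)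
    (hid : EqOn f id (sphere 0 r)) : ¬ MapsTo f (ball 0 r) (sphere 0 r) := by
  intro hmaps
  borelize E
  have hball : EqOn (fun x => (fderiv ℝ f x).det) 0 (ball 0 r) := fun x hx =>
    det_fderiv_eq_zero_of_eventually_mem hf.contDiffAt (interior_sphere 0 hr.ne')
      (mem_of_superset (isOpen_ball.mem_nhds hx) hmaps)
  have hclosedBall : EqOn (fun x => (fderiv ℝ f x).det) 0 (closedBall 0 r) := by
    rw [← closure_ball _ hr.ne']
    exact hball.closure
      (ContinuousLinearMap.continuous_det.comp (hf.continuous_fderiv one_ne_zero)) continuous_zero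
  let μ : Measure E := Measure.addHaar
  have hzero : μ.real (closedBall 0 r) = 0 := by
    rw [← setIntegral_det_fderiv_of_eqOn_frontier μ (isCompact_closedBall 0 r) hf
      (by rwa [frontier_closedBall _ hr.ne'])]
    exact setIntegral_eq_zero_of_forall_eq_zero hclosedBall
  have hpos : 0 < μ.real (closedBall 0 r) :=
    ENNReal.toReal_pos (measure_closedBall_pos μ 0 hr).ne' measure_closedBall_lt_top.ne
  exact hpos.ne' hzero

theorem exists_eq_zero_of_eqOn_id_sphere {E : Type*} [NormedAddCommGroup E]
    [InnerProductSpace ℝ E] [FiniteDimensional ℝ E] {f : E → E} {r : ℝ} (hr : 0 < r)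
    (hf : ContDiff ℝ 1 f) (hid : EqOn f id (sphere 0 r)) : ∃ x, f x = 0 := by
  by_contra! hne
  refine not_mapsTo_sphere_of_eqOn_id (f := fun x => (r / ‖f x‖) • f x) hr
    ((contDiff_const.div (hf.norm ℝ hne) fun x => norm_ne_zero_iff.2 (hne x)).smul hf)
    (fun x hx => ?_) fun x _ => ?_
  · have hx' : ‖x‖ = r := mem_sphere_zero_iff_norm.1 hx
    simp [hid hx, hx', hr.ne']
  · have hfx : ‖f x‖ ≠ 0 := norm_ne_zero_iff.2 (hne x)
    rw [mem_sphere_zero_iff_norm, norm_smul, norm_div, norm_norm, Real.norm_of_nonneg hr.le,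
      div_mul_cancel₀ _ hfx]

theorem exists_isFixedPt_of_hasCompactSupport_of_innerProductSpace {E : Type*}
    [NormedAddCommGroup E] [InnerProductSpace ℝ E] [FiniteDimensional ℝ E] {f : E → E}
    (hf : Continuous f) (hsupp : HasCompactSupport f) : ∃ x, Function.IsFixedPt f x := by
  by_contra! hfix
  obtain ⟨g, hg, hgf, hgsupp⟩ := hf.exists_contDiff_approx 1 (ε := fun x => dist x (f x))
    (continuous_id.dist hf) fun x => dist_pos.2 (Ne.symm (hfix x))
  obtain ⟨r, hr, hball⟩ := hsupp.isCompact.isBounded.subset_ball_lt 0 0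
  obtain ⟨x, hx⟩ := exists_eq_zero_of_eqOn_id_sphere hr (contDiff_id.sub hg) fun x hx => by
    have hxg : x ∉ Function.support g := fun h =>
      sphere_disjoint_ball.le_bot ⟨hx, hball (subset_tsupport f (hgsupp h))⟩
    simp [Function.notMem_support.1 hxg]
  have hgx : g x = x := (sub_eq_zero.1 hx).symm
  exact (hgf x).ne (by rw [hgx])

theorem exists_isFixedPt_of_hasCompactSupport {E : Type*} [NormedAddCommGroup E]
    [NormedSpace ℝ E] [FiniteDimensional ℝ E] {f : E → E} (hf : Continuous f)
    (hsupp : HasCompactSupport f) : ∃ x, Function.IsFixedPt f x := by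
  let e : E ≃L[ℝ] EuclideanSpace ℝ (Fin (Module.finrank ℝ E)) := toEuclidean
  have hsupp' : HasCompactSupport (e ∘ f ∘ e.symm) :=
    (hsupp.comp_homeomorph e.symm.toHomeomorph).comp_left e.map_zero
  obtain ⟨x, hx⟩ := exists_isFixedPt_of_hasCompactSupport_of_innerProductSpace
    (e.continuous.comp (hf.comp e.symm.continuous)) hsupp'
  exact ⟨e.symm x, e.injective (hx.trans (e.apply_symm_apply x).symm)⟩

theorem exists_isFixedPt_of_mapsTo_closedBall {E : Type*} [NormedAddCommGroup E]
    [NormedSpace ℝ E] [FiniteDimensional ℝ E] {f : E → E} {r : ℝ} (hr : 0 < r)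
    (hf : ContinuousOn f (closedBall 0 r)) (hmaps : MapsTo f (closedBall 0 r) (closedBall 0 r)) :
    ∃ x ∈ closedBall 0 r, Function.IsFixedPt f x := by
  have := instTietzeExtensionClosedBall ℝ (0 : E) hr
  obtain ⟨g, hg, hgf⟩ := ContinuousMap.exists_forall_mem_restrict_eq
    (isClosed_closedBall (x := (0 : E)) (ε := r)) ⟨_, hf.domRestrict⟩ fun x => hmaps x.2
  let φ : ContDiffBump (0 : E) := ⟨r, r + 1, hr, lt_add_one r⟩
  obtain ⟨x, hx⟩ := exists_isFixedPt_of_hasCompactSupport (φ.continuous.smul g.continuous)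
    (φ.hasCompactSupport.smul_right)
  have hxr : x ∈ closedBall 0 r := by
    rw [← hx, Pi.smul_apply']
    exact (convex_closedBall 0 r).smul_mem_of_zero_mem (mem_closedBall_self hr.le) (hg x)
      ⟨φ.nonneg, φ.le_one⟩
  refine ⟨x, hxr, ?_⟩
  have hφx : φ x • g x = x := hx
  rw [φ.one_of_mem_closedBall hxr, one_smul] at hφx
  exact (DFunLike.congr_fun hgf ⟨x, hxr⟩).symm.trans hφx

end Brouwer

open scoped Pointwise

namespace IsConvexCone

section Module

variable {E F : Type*} [AddCommGroup E] [Module ℝ E] [AddCommGroup F] [Module ℝ F]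
  {K K₁ K₂ : Set E}

theorem smul_mem (hK : IsConvexCone K) {r : ℝ} (hr : 0 ≤ r) {v : E} (hv : v ∈ K) : r • v ∈ K :=
  hK.2.2 r hr v hv

theorem add_mem (hK : IsConvexCone K) {v w : E} (hv : v ∈ K) (hw : w ∈ K) : v + w ∈ K := by
  have hmid : (2⁻¹ : ℝ) • v + (2⁻¹ : ℝ) • w ∈ K :=
    hK.2.1 hv hw (by norm_num) (by norm_num) (by norm_num)
  simpa [smul_add, smul_smul] using hK.smul_mem zero_le_two hmid

theorem sum_mem (hK : IsConvexCone K) {ι : Type*} {s : Finset ι} {f : ι → E}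
    (hf : ∀ i ∈ s, f i ∈ K) : ∑ i ∈ s, f i ∈ K :=
  Finset.sum_induction f (· ∈ K) (fun _ _ => hK.add_mem) hK.1 hf

theorem image (hK : IsConvexCone K) (L : E →ₗ[ℝ] F) : IsConvexCone (L '' K) := by
  refine ⟨⟨0, hK.1, L.map_zero⟩, hK.2.1.linear_image L, ?_⟩
  rintro r hr _ ⟨v, hv, rfl⟩
  exact ⟨r • v, hK.smul_mem hr hv, L.map_smul r v⟩

theorem prod (hK : IsConvexCone K) {K' : Set F} (hK' : IsConvexCone K') :
    IsConvexCone (K ×ˢ K') :=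
  ⟨⟨hK.1, hK'.1⟩, hK.2.1.prod hK'.2.1, fun _ hr _ hv =>
    ⟨hK.smul_mem hr hv.1, hK'.smul_mem hr hv.2⟩⟩

theorem sub (h₁ : IsConvexCone K₁) (h₂ : IsConvexCone K₂) : IsConvexCone (K₁ - K₂) := by
  refine ⟨⟨0, h₁.1, 0, h₂.1, sub_zero 0⟩, h₁.2.1.sub h₂.2.1, ?_⟩
  rintro r hr _ ⟨v, hv, w, hw, rfl⟩
  exact ⟨r • v, h₁.smul_mem hr hv, r • w, h₂.smul_mem hr hw, (smul_sub r v w).symm⟩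

theorem exists_submodule_eq (hK : IsConvexCone K) (hneg : ∀ v ∈ K, -v ∈ K) :
    ∃ S : Submodule ℝ E, K = S := by
  refine ⟨⟨⟨⟨K, hK.add_mem⟩, hK.1⟩, fun r v hv => ?_⟩, rfl⟩
  rcases le_total 0 r with hr | hr
  · exact hK.smul_mem hr hv
  · simpa using hK.smul_mem (neg_nonneg.2 hr) (hneg v hv)

theorem neg_mem_of_sub_eq_univ (h₁ : IsConvexCone K₁) (hsub : K₁ - K₂ = univ)
    (hinter : K₁ ∩ K₂ ⊆ {0}) {v : E} (hv : v ∈ K₁) : -v ∈ K₁ := by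
  obtain ⟨a, ha, b, hb, hab⟩ := mem_sub.1 (hsub ▸ mem_univ (-v) : -v ∈ K₁ - K₂)
  have hva : v + a = b := by rw [← sub_eq_zero, add_sub_assoc, hab, add_neg_cancel]
  have hzero : v + a = 0 := hinter ⟨h₁.add_mem hv ha, hva ▸ hb⟩
  rwa [neg_eq_of_add_eq_zero_right hzero]

theorem exists_submodule_eq_of_sub_eq_univ (h₁ : IsConvexCone K₁) (h₂ : IsConvexCone K₂)
    (hsub : K₁ - K₂ = univ) (hinter : K₁ ∩ K₂ ⊆ {0}) :
    (∃ S : Submodule ℝ E, K₁ = S) ∧ ∃ S : Submodule ℝ E, K₂ = S := by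
  have hsub' : K₂ - K₁ = univ := by rw [← neg_sub, hsub, neg_univ]
  exact ⟨h₁.exists_submodule_eq fun _ => h₁.neg_mem_of_sub_eq_univ hsub hinter,
    h₂.exists_submodule_eq fun _ => h₂.neg_mem_of_sub_eq_univ hsub' (inter_comm K₁ K₂ ▸ hinter)⟩

end Module

section Normed

variable {E F : Type*} [NormedAddCommGroup E] [NormedSpace ℝ E] [NormedAddCommGroup F]
  [NormedSpace ℝ F] {K : Set E}

theorem interior_nonempty_of_span_eq_top [FiniteDimensional ℝ E] (hK : IsConvexCone K)
    (hspan : Submodule.span ℝ K = ⊤) : (interior K).Nonempty := by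
  rw [hK.2.1.interior_nonempty_iff_affineSpan_eq_top,
    AffineSubspace.affineSpan_eq_top_iff_vectorSpan_eq_top_of_nonempty ℝ E E ⟨0, hK.1⟩,
    vectorSpan_eq_span_vsub_set_right ℝ hK.1]
  simpa only [vsub_eq_sub, sub_zero, image_id'] using hspan

theorem exists_ne_zero_forall_le_of_ne_univ (hK : IsConvexCone K)
    [FiniteDimensional ℝ (Submodule.span ℝ K)] (hne : K ≠ univ) :
    ∃ f : StrongDual ℝ E, f ≠ 0 ∧ ∃ x, ∀ v ∈ K, f v ≤ f x := by
  by_cases hspan : Submodule.span ℝ K = ⊤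
  · have : FiniteDimensional ℝ E := Module.Finite.equiv (LinearEquiv.ofTop _ hspan)
    obtain ⟨x, hx⟩ := (ne_univ_iff_exists_notMem K).1 hne
    obtain ⟨f, hf, hfx⟩ := geometric_hahn_banach_of_nonempty_interior_point hK.2.1
      (fun h => hx (interior_subset h)) (hK.interior_nonempty_of_span_eq_top hspan)
    exact ⟨f, hf, x, hfx⟩
  · obtain ⟨x, -, hx⟩ := SetLike.exists_of_lt (lt_top_iff_ne_top.2 hspan)
    obtain ⟨f, u, hfu, hux⟩ := geometric_hahn_banach_closed_point
      (Submodule.span ℝ K).convex (Submodule.span ℝ K).closed_of_finiteDimensional hx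
    refine ⟨f, ?_, x, fun v hv => ((hfu v (Submodule.subset_span hv)).trans hux).le⟩
    rintro rfl
    exact (hfu 0 (zero_mem _)).not_gt hux

theorem exists_strongDual_nonneg (hK : IsConvexCone K)
    [FiniteDimensional ℝ (Submodule.span ℝ K)] (hne : K ≠ univ) :
    ∃ p : StrongDual ℝ E, p ≠ 0 ∧ ∀ v ∈ K, 0 ≤ p v := by
  obtain ⟨f, hf, x, hfx⟩ := hK.exists_ne_zero_forall_le_of_ne_univ hne
  refine ⟨-f, neg_ne_zero.2 hf, fun v hv => neg_nonneg.2 (not_lt.1 fun hpos => ?_)⟩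
  obtain ⟨k, hk⟩ := exists_nat_gt (f x / f v)
  have hle : k * f v ≤ f x := by simpa using hfx _ (hK.smul_mem k.cast_nonneg hv)
  exact ((div_lt_iff₀ hpos).1 hk).not_ge hle

theorem exists_continuous_rightInverse [FiniteDimensional ℝ F] (hK : IsConvexCone K)
    {L : E →ₗ[ℝ] F} (hL : L '' K = univ) :
    ∃ σ : F → E, Continuous σ ∧ σ 0 = 0 ∧ ∀ u, σ u ∈ K ∧ L (σ u) = u := by
  let b := Module.finBasis ℝ F
  have hsurj (u : F) : ∃ v ∈ K, L v = u := (mem_image L K u).1 (hL ▸ mem_univ u)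
  choose lift hmem hlift using hsurj
  refine ⟨fun u => ∑ i, ((b.repr u i)⁺ • lift (b i) + (b.repr u i)⁻ • lift (-b i)), ?_, ?_,
    fun u => ⟨?_, ?_⟩⟩
  · have hcoord (i) : Continuous fun u => b.repr u i :=
      (b.coord i).continuous_of_finiteDimensional
    fun_prop
  · simp
  · exact hK.sum_mem fun i _ => hK.add_mem (hK.smul_mem (posPart_nonneg _) (hmem _))
      (hK.smul_mem (negPart_nonneg _) (hmem _))
  · calc L (∑ i, ((b.repr u i)⁺ • lift (b i) + (b.repr u i)⁻ • lift (-b i)))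
        = ∑ i, ((b.repr u i)⁺ - (b.repr u i)⁻) • b i := by
          simp only [map_sum, map_add, map_smul, hlift, smul_neg, ← sub_eq_add_neg, ← sub_smul]
      _ = u := by simp only [posPart_sub_negPart, b.sum_repr]

end Normed

end IsConvexCone

section TangentCone

variable {V E : Type*} [NormedAddCommGroup V] [NormedSpace ℝ V] [NormedAddCommGroup E]
  [NormedSpace ℝ E] {C D : Set V} {F : V → E} {L : V →L[ℝ] E}

theorem IsConvexCone.eventually_smul_mem (hC : IsConvexCone C) (hD : D ∈ 𝓝[C] 0) {B : Set V}
    (hB : Bornology.IsBounded B) : ∀ᶠ ε : ℝ in 𝓝[>] 0, ∀ c ∈ C ∩ B, ε • c ∈ D := by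
  obtain ⟨U, hU, hUD⟩ := mem_nhdsWithin_iff_exists_mem_nhds_inter.1 hD
  have habs : ∀ᶠ ε : ℝ in 𝓝 0, MapsTo (ε • ·) B U :=
    (NormedSpace.isVonNBounded_of_isBounded ℝ hB hU).eventually_nhds_zero (mem_of_mem_nhds hU)
  filter_upwards [nhdsWithin_le_nhds habs, self_mem_nhdsWithin] with ε hε hpos c hc
  exact hUD ⟨hε hc.2, hC.smul_mem hpos.le hc.1⟩

theorem IsConvexCone.tendstoUniformlyOn_inv_smul (hC : IsConvexCone C)
    (hF : HasFDerivWithinAt F L C 0) (hF₀ : F 0 = 0) {B : Set V} (hB : Bornology.IsBounded B) :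
    TendstoUniformlyOn (fun (ε : ℝ) c => ε⁻¹ • F (ε • c)) L (𝓝[>] 0) (C ∩ B) := by
  rw [Metric.tendstoUniformlyOn_iff]
  intro κ hκ
  obtain ⟨M, hM, hBM⟩ := hB.subset_ball_lt 0 0
  have hbound : ∀ᶠ c in 𝓝[C] 0, ‖F c - L c‖ ≤ κ / M * ‖c‖ := by
    simpa [hF₀] using hF.isLittleO.bound (div_pos hκ hM)
  filter_upwards [hC.eventually_smul_mem hbound hB, self_mem_nhdsWithin]
    with ε hε (hpos : 0 < ε) c hc
  calc dist (L c) (ε⁻¹ • F (ε • c)) = ε⁻¹ * ‖F (ε • c) - L (ε • c)‖ := by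
        rw [dist_eq_norm', map_smul, ← norm_smul_of_nonneg (inv_nonneg.2 hpos.le), smul_sub,
          inv_smul_smul₀ hpos.ne']
    _ ≤ ε⁻¹ * (κ / M * ‖ε • c‖) := by gcongr; exact hε c hc
    _ = κ / M * ‖c‖ := by rw [norm_smul_of_nonneg hpos.le]; field_simp
    _ < κ / M * M := by gcongr; exact mem_ball_zero_iff.1 (hBM hc.2)
    _ = κ := div_mul_cancel₀ κ hM.ne'

theorem IsConvexCone.eventually_exists_eq_zero [FiniteDimensional ℝ E] (hC : IsConvexCone C)
    (hL : L '' C = univ) (hD : D ∈ 𝓝[C] 0) (hFD : ContinuousOn F D)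
    (hF : HasFDerivWithinAt F L D 0) (hF₀ : F 0 = 0) {c₀ : V} (hc₀ : c₀ ∈ C) (hLc₀ : L c₀ = 0)
    {N : Set V} (hN : N ∈ 𝓝 c₀) :
    ∀ᶠ ε : ℝ in 𝓝[>] 0, ∃ c ∈ N, ε • c ∈ D ∧ F (ε • c) = 0 := by
  obtain ⟨σ, hσ, hσ₀, hσL⟩ := hC.exists_continuous_rightInverse (L := L.toLinearMap) hL
  let γ : E → V := fun u => c₀ + σ u
  have hγ : Continuous γ := continuous_const.add hσ
  have hγC (u : E) : γ u ∈ C := hC.add_mem hc₀ (hσL u).1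
  have hLγ (u : E) : L (γ u) = u := by
    rw [map_add, hLc₀, zero_add]
    exact (hσL u).2
  obtain ⟨r, hr, hrN⟩ := nhds_basis_closedBall.mem_iff.1
    (hγ.continuousAt.preimage_mem_nhds (x := 0) (by simpa [γ, hσ₀] using hN))
  have hbdd : Bornology.IsBounded (γ '' closedBall 0 r) :=
    ((isCompact_closedBall 0 r).image hγ).isBounded
  have hunif := Metric.tendstoUniformlyOn_iff.1
    (hC.tendstoUniformlyOn_inv_smul (hF.mono_of_mem_nhdsWithin hD) hF₀ hbdd) r hr
  filter_upwards [hC.eventually_smul_mem hD hbdd, hunif, self_mem_nhdsWithin] with ε hεD hε hpos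
  have hγB {u : E} (hu : u ∈ closedBall 0 r) : γ u ∈ C ∩ γ '' closedBall 0 r :=
    ⟨hγC u, mem_image_of_mem γ hu⟩
  have hcont : ContinuousOn (fun u => u - ε⁻¹ • F (ε • γ u)) (closedBall 0 r) :=
    continuousOn_id.sub <| (hFD.comp (hγ.const_smul ε).continuousOn
      fun u hu => hεD _ (hγB hu)).const_smul ε⁻¹
  obtain ⟨u, hu, hfix⟩ := exists_isFixedPt_of_mapsTo_closedBall hr hcont fun u hu => by
    have hdist := hε _ (hγB hu)
    rw [hLγ, dist_eq_norm] at hdist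
    exact mem_closedBall_zero_iff.2 hdist.le
  have hzero : ε⁻¹ • F (ε • γ u) = 0 := sub_eq_self.1 hfix
  exact ⟨γ u, hrN hu, hεD _ (hγB hu), (smul_eq_zero_iff_right (inv_ne_zero hpos.ne')).1 hzero⟩

theorem IsConvexCone.mem_tangentConeAt_setOf_eq_zero [FiniteDimensional ℝ E] (hC : IsConvexCone C)
    (hL : L '' C = univ) (hD : D ∈ 𝓝[C] 0) (hFD : ContinuousOn F D)
    (hF : HasFDerivWithinAt F L D 0) (hF₀ : F 0 = 0) {c₀ : V} (hc₀ : c₀ ∈ C) (hLc₀ : L c₀ = 0) :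
    c₀ ∈ tangentConeAt ℝ {c ∈ D | F c = 0} 0 := by
  have hid : Tendsto (fun z : ℝ × V => z.2) (𝓝[>] 0 ×ˢ 𝓝 c₀) (𝓝 c₀) := tendsto_snd
  refine mem_tangentConeAt_of_frequently (𝓝[>] (0 : ℝ) ×ˢ 𝓝 c₀) (fun z => z.1⁻¹)
    (fun z => z.1 • z.2) ?_ (fun hev => ?_) (hid.congr' ?_)
  · simpa using (tendsto_nhds_of_tendsto_nhdsWithin tendsto_fst).smul hid
  · obtain ⟨P, hP, Q, hQ, hPQ⟩ := eventually_prod_iff.1 hev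
    obtain ⟨ε, hε, c, hc, hmem⟩ :=
      (hP.and (hC.eventually_exists_eq_zero hL hD hFD hF hF₀ hc₀ hLc₀ hQ)).exists
    exact hPQ hε hc (by simpa using hmem)
  · filter_upwards [prod_mem_prod self_mem_nhdsWithin univ_mem] with z hz
    exact (inv_smul_smul₀ hz.1.ne' z.2).symm

theorem IsConvexCone.image_inter_image_subset_tangentConeAt [FiniteDimensional ℝ E] {W : Type*}
    [NormedAddCommGroup W] [NormedSpace ℝ W] {C' D' : Set W} {F' : W → E} {L' : W →L[ℝ] E}
    (hC : IsConvexCone C) (hD : D ∈ 𝓝[C] 0) (hFD : ContinuousOn F D)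
    (hF : HasFDerivWithinAt F L D 0) (hC' : IsConvexCone C') (hD' : D' ∈ 𝓝[C'] 0)
    (hFD' : ContinuousOn F' D') (hF' : HasFDerivWithinAt F' L' D' 0) (hFF' : F 0 = F' 0)
    (hsub : L '' C - L' '' C' = univ) :
    L '' C ∩ L' '' C' ⊆ tangentConeAt ℝ (F '' D ∩ F' '' D') (F 0) := by
  have hfst : HasFDerivWithinAt (fun z : V × W => F z.1) (L.comp (.fst ℝ V W)) (D ×ˢ D') 0 :=
    hF.comp 0 hasFDerivWithinAt_fst mapsTo_fst_prod
  have hsnd : HasFDerivWithinAt (fun z : V × W => F' z.2) (L'.comp (.snd ℝ V W)) (D ×ˢ D') 0 :=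
    hF'.comp 0 hasFDerivWithinAt_snd mapsTo_snd_prod
  have himage : (L.comp (.fst ℝ V W) - L'.comp (.snd ℝ V W)) '' C ×ˢ C' = univ := by
    rw [← hsub, ← image2_sub, image2_image_left, image2_image_right, ← image_prod]
    rfl
  rintro _ ⟨⟨a, ha, rfl⟩, b, hb, hab⟩
  have htan : (a, b) ∈ tangentConeAt ℝ {z ∈ D ×ˢ D' | F z.1 - F' z.2 = 0} 0 :=
    (hC.prod hC').mem_tangentConeAt_setOf_eq_zero himage (nhdsWithin_prod hD hD')
      ((hFD.comp continuousOn_fst mapsTo_fst_prod).sub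
        (hFD'.comp continuousOn_snd mapsTo_snd_prod))
      (hfst.sub hsnd) (sub_eq_zero.2 hFF') ⟨ha, hb⟩ (sub_eq_zero.2 hab.symm)
  refine tangentConeAt_mono ?_ ((hfst.mono (sep_subset _ _)).mapsTo_tangent_cone htan)
  rintro _ ⟨z, ⟨hz, hFz⟩, rfl⟩
  exact ⟨mem_image_of_mem F hz.1, z.2, hz.2, (sub_eq_zero.1 hFz).symm⟩

end TangentCone

namespace IsBoltyanskiCone

variable {E : Type*} [NormedAddCommGroup E] [NormedSpace ℝ E] {A A₁ A₂ K K₁ K₂ : Set E} {y : E}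

theorem exists_hasFDerivWithinAt (h : IsBoltyanskiCone A y K) :
    ∃ (m : ℕ) (C D : Set (EuclideanSpace ℝ (Fin m))) (L : EuclideanSpace ℝ (Fin m) →L[ℝ] E)
      (F : EuclideanSpace ℝ (Fin m) → E),
      IsConvexCone C ∧ L '' C = K ∧ D ∈ 𝓝[C] 0 ∧ ContinuousOn F D ∧ MapsTo F D A ∧ F 0 = y ∧
      HasFDerivWithinAt F L D 0 := by
  obtain ⟨m, C, L, δ, F, hC, rfl, hδ, hFcont, hFA, rfl, hFL⟩ := h
  refine ⟨m, C, C ∩ closedBall 0 δ, L.toContinuousLinearMap, F, hC, rfl,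
    inter_mem_nhdsWithin C (closedBall_mem_nhds 0 hδ), hFcont, hFA, rfl, .of_isLittleO ?_⟩
  simpa using hFL

theorem isConvexCone (h : IsBoltyanskiCone A y K) : IsConvexCone K := by
  obtain ⟨m, C, L, δ, F, hC, rfl, -⟩ := h
  exact hC.image L

theorem finiteDimensional_span (h : IsBoltyanskiCone A y K) :
    FiniteDimensional ℝ (Submodule.span ℝ K) := by
  obtain ⟨m, C, L, δ, F, -, rfl, -⟩ := h
  rw [Submodule.span_image]
  infer_instance

theorem finiteDimensional_span_sub (h₁ : IsBoltyanskiCone A₁ y K₁) (h₂ : IsBoltyanskiCone A₂ y K₂) :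
    FiniteDimensional ℝ (Submodule.span ℝ (K₁ - K₂)) := by
  have := h₁.finiteDimensional_span
  have := h₂.finiteDimensional_span
  refine Submodule.finiteDimensional_of_le (S₂ := Submodule.span ℝ K₁ ⊔ Submodule.span ℝ K₂) ?_
  rw [Submodule.span_le]
  rintro _ ⟨v, hv, w, hw, rfl⟩
  exact sub_mem (Submodule.mem_sup_left (Submodule.subset_span hv))
    (Submodule.mem_sup_right (Submodule.subset_span hw))

theorem inter_subset_tangentConeAt (h₁ : IsBoltyanskiCone A₁ y K₁) (h₂ : IsBoltyanskiCone A₂ y K₂)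
    (hsub : K₁ - K₂ = univ) : K₁ ∩ K₂ ⊆ tangentConeAt ℝ (A₁ ∩ A₂) y := by
  have := h₁.finiteDimensional_span_sub h₂
  have : FiniteDimensional ℝ E := .equiv (LinearEquiv.ofTop _ (hsub ▸ Submodule.span_univ))
  obtain ⟨m₁, C₁, D₁, L₁, F₁, hC₁, rfl, hD₁, hcont₁, hA₁, rfl, hL₁⟩ :=
    h₁.exists_hasFDerivWithinAt
  obtain ⟨m₂, C₂, D₂, L₂, F₂, hC₂, rfl, hD₂, hcont₂, hA₂, hF₂, hL₂⟩ :=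
    h₂.exists_hasFDerivWithinAt
  exact (hC₁.image_inter_image_subset_tangentConeAt hD₁ hcont₁ hL₁ hC₂ hD₂ hcont₂ hL₂
    hF₂.symm hsub).trans (tangentConeAt_mono
      (inter_subset_inter hA₁.image_subset hA₂.image_subset))

end IsBoltyanskiCone

theorem LocallySeparated.tangentConeAt_subset {E : Type*} [NormedAddCommGroup E] [NormedSpace ℝ E]
    {A₁ A₂ : Set E} {y : E} (h : LocallySeparated A₁ A₂ y) : tangentConeAt ℝ (A₁ ∩ A₂) y ⊆ {0} := by
  obtain ⟨N, hN, hAN⟩ := h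
  refine tangentConeAt_subset_zero fun hacc => ?_
  obtain ⟨x, ⟨hxN, hxA⟩, hxy⟩ := accPt_iff_nhds.1 hacc N hN
  exact hxy (hAN.subset ⟨hxA, hxN⟩)

theorem linearly_separable_of_locally_separated_general {E : Type*} [NormedAddCommGroup E]
    [NormedSpace ℝ E] {A₁ A₂ K₁ K₂ : Set E} {y : E} (hsep : LocallySeparated A₁ A₂ y)
    (h₁ : IsBoltyanskiCone A₁ y K₁) (h₂ : IsBoltyanskiCone A₂ y K₂)
    (hns : (¬ ∃ S : Submodule ℝ E, K₁ = S) ∨ ¬ ∃ S : Submodule ℝ E, K₂ = S) :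
    ∃ p : StrongDual ℝ E, p ≠ 0 ∧ (∀ v ∈ K₁, 0 ≤ p v) ∧ ∀ v ∈ K₂, p v ≤ 0 := by
  have hK₁ := h₁.isConvexCone
  have hK₂ := h₂.isConvexCone
  have hne : K₁ - K₂ ≠ univ := fun hsub => by
    have hinter : K₁ ∩ K₂ ⊆ {0} :=
      (h₁.inter_subset_tangentConeAt h₂ hsub).trans hsep.tangentConeAt_subset
    exact not_and_or.2 hns (hK₁.exists_submodule_eq_of_sub_eq_univ hK₂ hsub hinter)
  have := h₁.finiteDimensional_span_sub h₂
  obtain ⟨p, hp, hpos⟩ := (hK₁.sub hK₂).exists_strongDual_nonneg hne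
  refine ⟨p, hp, fun v hv => ?_, fun v hv => ?_⟩
  · simpa using hpos _ (sub_mem_sub hv hK₂.1)
  · simpa using hpos _ (sub_mem_sub hK₁.1 hv)

/-- If two sets are locally separated at `y`, and one of two Boltyanski approximating
cones at `y` is not a linear subspace, then the cones are linearly separable. -/
theorem linearly_separable_of_locally_separated {n : ℕ}
    (A₁ A₂ K₁ K₂ : Set (EuclideanSpace ℝ (Fin n))) (y : EuclideanSpace ℝ (Fin n))
    (hy : y ∈ A₁ ∩ A₂)
    (hsep : LocallySeparated A₁ A₂ y)
    (h₁ : IsBoltyanskiCone A₁ y K₁) (h₂ : IsBoltyanskiCone A₂ y K₂)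
    (hns : (¬ ∃ S : Submodule ℝ (EuclideanSpace ℝ (Fin n)), K₁ = ↑S) ∨
           (¬ ∃ S : Submodule ℝ (EuclideanSpace ℝ (Fin n)), K₂ = ↑S)) :
    ∃ p : Module.Dual ℝ (EuclideanSpace ℝ (Fin n)), p ≠ 0 ∧
      (∀ v ∈ K₁, 0 ≤ p v) ∧ (∀ v ∈ K₂, p v ≤ 0) := by
  obtain ⟨p, hp, hpK⟩ := linearly_separable_of_locally_separated_general hsep h₁ h₂ hns
  exact ⟨p.toLinearMap, fun h => hp (ContinuousLinearMap.coe_injective h), hpK⟩
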